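/- There exists N such that for all n ≥ N, the number γ(n) of C∞-words of length n over the alphabet {r,s} (with r < s) satisfies γ(n) ≤ n^α, where α = ln(2s²)/ln(2rs/(r+s)). -/

import Mathlib

/-!
A C∞-word `w` with nonempty derivative `v = D w` is determined by `v`, its first letter and the
lengths of its first and last runs (`eq_of_D_eq`). Both lengths lie in `[1, s]`, and the first one
lies in `[1, r]` when `v` starts with `r`, because a longer first run contributes the letter `s` to
`v` (`firstRun_le`). Hence, for a fixed first letter, `v` has at most `r * s` or `s ^ 2` preimages
according to its own first letter.

With `ρ = 2 * r * s / (r + s)`, the derivative satisfies `|v| ≤ |w| / ρ + 3 * s` (`length_D_le`):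
`|w|` is the sum of `v` up to a bounded error, the runs of `v` alternate between `r` and `s`, their
lengths lie in `[r, s]` except at the two ends, and so in the worst case runs of `s` letters `r`
alternate with runs of `r` letters `s`, which gives average letter `ρ` (`defect_expand`).

If `N_a(x)` is the number of C∞-words of length at most `x` with first letter `a`, this gives
`N_a(x) ≤ c + r * s * N_r(x / ρ + 3 * s) + s ^ 2 * N_s(x / ρ + 3 * s)` (`card_startSet_le`), hence
`γ(n) = O(n ^ α')` with `α' = log (s * (r + s)) / log ρ`. As `s * (r + s) < 2 * s ^ 2`, the exponent
`α'` is smaller than the required one, and the difference absorbs the constant.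
-/

namespace Kola

/-- Run-length encoding of a finite word as (letter, count) pairs. -/
def rle : List ℕ → List (ℕ × ℕ)
  | [] => []
  | a :: l =>
    match rle l with
    | [] => [(a, 1)]
    | (b, n) :: t => if a = b then (b, n + 1) :: t else (a, 1) :: (b, n) :: t

/-- Boundary adjustment for the first run: discard if length ≤ r, extend to s if length in (r,s]. -/
def fixRun (r s : ℕ) : List (ℕ × ℕ) → List (ℕ × ℕ)
  | [] => []
  | (a, n) :: t => if n ≤ r then t else if n ≤ s then (a, s) :: t else (a, n) :: t

/-- The Kolakoski derivative over the alphabet {r,s}. -/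
def D (r s : ℕ) (w : List ℕ) : List ℕ :=
  match rle w with
  | [] => []
  | [(_, n)] => if n < s then [] else [n]
  | ps => ((fixRun r s ((fixRun r s ps).reverse)).reverse).map Prod.snd

/-- A C∞-word over {r,s}: all iterated derivatives are words over {r,s}. -/
def IsCInf (r s : ℕ) (w : List ℕ) : Prop :=
  ∀ k : ℕ, ∀ a ∈ (D r s)^[k] w, a = r ∨ a = s

/-- `t` enumerates the starting indices of the (maximal) runs of the sequence `z`. -/
def IsRunPartition (z : ℕ → ℕ) (t : ℕ → ℕ) : Prop :=
  t 0 = 0 ∧ StrictMono t ∧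
  (∀ k i, t k ≤ i → i < t (k + 1) → z i = z (t k)) ∧
  (∀ k, z (t (k + 1)) ≠ z (t k))

/-- `w` is the run-length sequence of `z`. -/
def IsRunLengthSeq (z w : ℕ → ℕ) : Prop :=
  ∃ t, IsRunPartition z t ∧ ∀ k, w k = t (k + 1) - t k

/-- A Kolakoski sequence over {r,s}: a sequence over {r,s} equal to its own run-length sequence. -/
def IsKolakoski (r s : ℕ) (z : ℕ → ℕ) : Prop :=
  (∀ n, z n = r ∨ z n = s) ∧ IsRunLengthSeq z z

def EventuallyPeriodic (z : ℕ → ℕ) : Prop :=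
  ∃ m q : ℕ, 1 ≤ q ∧ ∀ i, m ≤ i → z (i + q) = z i

/-- `w` occurs as a factor of the infinite sequence `z`. -/
def FactorOf (w : List ℕ) (z : ℕ → ℕ) : Prop :=
  ∃ i, w = (List.range w.length).map fun k => z (i + k)

/-- Letter-exchange on words over {r,s}. -/
def exch (r s : ℕ) (w : List ℕ) : List ℕ := w.map fun a => if a = r then s else r

/-- Number of occurrences of `w` as a factor of the prefix of length `n` of `z`. -/
def countOcc (z : ℕ → ℕ) (w : List ℕ) (n : ℕ) : ℕ :=
  ((Finset.range n).filter fun i => i + w.length ≤ n ∧ ∀ k < w.length, z (i + k) = w.getD k 0).card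

/-- All words of length n over {r,s}. -/
def allWords (r s : ℕ) : ℕ → Finset (List ℕ)
  | 0 => {[]}
  | n + 1 => (allWords r s n).image (List.cons r) ∪ (allWords r s n).image (List.cons s)


/-! ### Run lengths -/

/-- The run lengths of a word. -/
def cnt (w : List ℕ) : List ℕ := (rle w).map Prod.snd

/-- The contribution to the derivative of a first or last run of length `n`, for a word with at
least two runs. -/
def fx (r s n : ℕ) : List ℕ := if n ≤ r then [] else if n ≤ s then [s] else [n]

/-- The word whose first letter is `a`, whose run lengths are `c` and whose letters alternate
between `r` and `s` from one run to the next. -/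
def expand (r s : ℕ) : ℕ → List ℕ → List ℕ
  | _, [] => []
  | a, n :: c => List.replicate n a ++ expand r s (if a = r then s else r) c

lemma rle_cons (a : ℕ) (l : List ℕ) : ∃ n t, rle (a :: l) = (a, n + 1) :: t := by
  rcases h : rle l with _ | ⟨⟨b, n⟩, t⟩
  · exact ⟨0, [], by simp [rle, h]⟩
  · by_cases hab : a = b
    · exact ⟨n, t, by simp [rle, h, hab]⟩
    · exact ⟨0, (b, n) :: t, by simp [rle, h, hab]⟩

lemma cnt_pos (w : List ℕ) : ∀ n ∈ cnt w, 1 ≤ n := by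
  induction w with
  | nil => simp [cnt, rle]
  | cons a l ih =>
    rcases h : rle l with _ | ⟨⟨b, n⟩, t⟩
    · simp [cnt, rle, h]
    · simp only [cnt, h] at ih
      by_cases hab : a = b
      · simp_all [cnt, rle]
        exact ih.2
      · simp_all [cnt, rle]
        exact ih.2

lemma cnt_eq_nil {w : List ℕ} (h : cnt w = []) : w = [] := by
  cases w with
  | nil => rfl
  | cons a l =>
    obtain ⟨n, t, e⟩ := rle_cons a l
    simp [cnt, e] at h

lemma sum_cnt (w : List ℕ) : (cnt w).sum = w.length := by
  induction w with
  | nil => simp [cnt, rle]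
  | cons a l ih =>
    rcases h : rle l with _ | ⟨⟨b, n⟩, t⟩
    · simp_all [cnt, rle]
      omega
    · simp only [cnt, h, List.map_cons, List.sum_cons] at ih
      by_cases hab : a = b
      · simp [cnt, rle, h, hab]; omega
      · simp [cnt, rle, h, hab]; omega

/-- Over the alphabet `{r, s}` a word is determined by its first letter and its run lengths. -/
lemma expand_cnt {r s : ℕ} {a : ℕ} {l : List ℕ} (h : ∀ b ∈ a :: l, b = r ∨ b = s) :
    expand r s a (cnt (a :: l)) = a :: l := by
  induction l generalizing a with
  | nil => simp [cnt, rle, expand]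
  | cons b l ih =>
    have hb := ih (a := b) (fun c hc => h c (List.mem_cons_of_mem _ hc))
    obtain ⟨n, t, e⟩ := rle_cons b l
    by_cases hab : a = b
    · subst hab
      have e2 : rle (a :: a :: l) = (a, n + 1 + 1) :: t := by rw [rle, e]; simp
      simp only [cnt, e, e2, List.map_cons, expand, List.replicate_succ (n := n + 1),
        List.cons_append] at hb ⊢
      rw [hb]
    · have e2 : rle (a :: b :: l) = (a, 1) :: (b, n + 1) :: t := by rw [rle, e]; simp [hab]
      have hswap : (if a = r then s else r) = b := by
        have h1 := h a (by simp)
        have h2 := h b (by simp)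
        split_ifs with h3
        · rcases h2 with h2 | h2
          · exact absurd (h3.trans h2.symm) hab
          · exact h2.symm
        · rcases h2 with h2 | h2
          · exact h2.symm
          · exact absurd ((h1.resolve_left h3).trans h2.symm) hab
      have e3 : cnt (a :: b :: l) = 1 :: cnt (b :: l) := by simp [cnt, e, e2]
      rw [e3, expand, hswap, hb]
      rfl

lemma D_cases (r s : ℕ) (w : List ℕ) :
    (cnt w = [] ∧ D r s w = []) ∨
    (∃ n, cnt w = [n] ∧ D r s w = if n < s then [] else [n]) ∨
    (∃ x m y, cnt w = x :: (m ++ [y]) ∧ D r s w = fx r s x ++ m ++ fx r s y) := by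
  rcases h : rle w with _ | ⟨⟨a, x⟩, t⟩
  · left; simp [cnt, D, h]
  right
  rcases List.eq_nil_or_concat t with rfl | ⟨m, ⟨b, y⟩, rfl⟩
  · left; exact ⟨x, by simp [cnt, h], by simp [D, h]⟩
  right
  refine ⟨x, m.map Prod.snd, y, by simp [cnt, h], ?_⟩
  have hD : D r s w =
      ((fixRun r s ((fixRun r s ((a, x) :: (m ++ [(b, y)]))).reverse)).reverse).map Prod.snd := by
    unfold D
    rw [h, List.concat_eq_append]
    cases m <;> rfl
  rw [hD]
  simp only [fixRun, fx]
  split_ifs <;> simp [*]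

/-! ### The length of the derivative -/

/-- `(r + s) * sum - 2 * r * s * length`: the defect of the sum of a word with respect to the
harmonic mean of `r` and `s` per letter. -/
def defect (r s : ℕ) (v : List ℕ) : ℤ := ((r : ℤ) + s) * (v.sum : ℤ) - 2 * r * s * v.length

lemma defect_expand_cons (r s a n : ℕ) (c : List ℕ) :
    defect r s (expand r s a (n :: c)) =
      n * (((r : ℤ) + s) * a - 2 * r * s) + defect r s (expand r s (if a = r then s else r) c) := by
  simp only [defect, expand, List.sum_append, List.length_append, List.sum_replicate,
    List.length_replicate, smul_eq_mul]
  push_cast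
  ring

/-- A run of `r`'s of length at most `s` lowers the defect by at most `r * s * (s - r)`, and a run
of `s`'s of length at least `r` raises it by at least that much; runs of the two kinds
alternate. The last run `y` may be short: if it consists of `s`'s it still does not lower the
defect. -/
lemma defect_expand {r s : ℕ} (hrs : r < s) {m : List ℕ} (hm : ∀ n ∈ m, n = r ∨ n = s) {y : ℕ}
    (hy : y ≤ s) :
    0 ≤ defect r s (expand r s s (m ++ [y])) ∧
      -((r : ℤ) * s * (s - r)) ≤ defect r s (expand r s r (m ++ [y])) := by
  have hrs' : (0 : ℤ) < s - r := by have : (r : ℤ) < s := by exact_mod_cast hrs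
                                    linarith
  have hr0 : (0 : ℤ) ≤ r := by positivity
  have hs0 : (0 : ℤ) ≤ s := by positivity
  have hsr : ¬ s = r := by omega
  have low : ∀ n : ℕ, n ≤ s →
      -((r : ℤ) * s * (s - r)) ≤ n * (((r : ℤ) + s) * r - 2 * r * s) := by
    intro n hn
    have hn' : (n : ℤ) ≤ s := by exact_mod_cast hn
    have := mul_nonneg (mul_nonneg hr0 hrs'.le) (sub_nonneg.2 hn')
    nlinarith
  have high : ∀ n : ℕ, r ≤ n →
      (r : ℤ) * s * (s - r) ≤ n * (((r : ℤ) + s) * s - 2 * r * s) := by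
    intro n hn
    have hn' : (r : ℤ) ≤ n := by exact_mod_cast hn
    have := mul_nonneg (mul_nonneg hs0 hrs'.le) (sub_nonneg.2 hn')
    nlinarith
  induction m with
  | nil =>
    have h0 : ∀ a, defect r s (expand r s a []) = 0 := by intro a; simp [expand, defect]
    simp only [List.nil_append, defect_expand_cons, h0, add_zero]
    refine ⟨?_, low y hy⟩
    have : ((r : ℤ) + s) * s - 2 * r * s = s * (s - r) := by ring
    rw [this]
    positivity
  | cons n m ih =>
    obtain ⟨h1, h2⟩ := ih (fun k hk => hm k (List.mem_cons_of_mem _ hk))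
    have hn : r ≤ n ∧ n ≤ s := by rcases hm n (by simp) with rfl | rfl <;> omega
    simp only [List.cons_append, defect_expand_cons, if_neg hsr, if_true]
    have := low n hn.2
    have := high n hn.1
    constructor <;> linarith

lemma le_of_fx {r s x : ℕ} (hrs : r < s) (h : ∀ a ∈ fx r s x, a = r ∨ a = s) : x ≤ s := by
  unfold fx at h
  split_ifs at h
  · omega
  · assumption
  · have := h x (by simp)
    omega

/-- A word over `{r, s}` whose derivative is over `{r, s}` has average letter at least the harmonic
mean of `r` and `s`, up to a bounded error. -/
lemma defect_ge {r s : ℕ} (hrs : r < s) {v : List ℕ} (hv : ∀ a ∈ v, a = r ∨ a = s)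
    (hD : ∀ a ∈ D r s v, a = r ∨ a = s) : -((r : ℤ) * s * (s - r)) ≤ defect r s v := by
  have hrs' : (0 : ℤ) < s - r := by have : (r : ℤ) < s := by exact_mod_cast hrs
                                    linarith
  have hsr : ¬ s = r := by omega
  have hc0 : 0 ≤ (r : ℤ) * s * (s - r) := by positivity
  cases v with
  | nil => simp only [defect]; simpa using hc0
  | cons a l =>
    have he := expand_cnt hv
    rw [← he]
    rcases D_cases r s (a :: l) with ⟨h, -⟩ | ⟨n, h, h2⟩ | ⟨x, m, y, h, h2⟩
    · exact absurd (cnt_eq_nil h) (by simp)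
    · rw [h]
      have hn : n ≤ s := by
        rw [h2] at hD
        split_ifs at hD with h3
        · omega
        · have := hD n (by simp)
          omega
      obtain ⟨h3, h4⟩ := defect_expand hrs (m := []) (by simp) hn
      rcases hv a (by simp) with rfl | rfl
      · exact h4
      · exact (neg_nonpos.2 hc0).trans h3
    · rw [h]
      rw [h2] at hD
      have hx : x ≤ s := le_of_fx hrs (fun b hb => hD b (by simp [hb]))
      have hy : y ≤ s := le_of_fx hrs (fun b hb => hD b (by simp [hb]))
      obtain ⟨h3, h4⟩ := defect_expand hrs (m := m) (fun b hb => hD b (by simp [hb])) hy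
      have hx' : (x : ℤ) ≤ s := by exact_mod_cast hx
      rw [defect_expand_cons]
      rcases hv a (by simp) with rfl | rfl
      · rw [if_pos rfl]
        have := mul_nonneg (mul_nonneg (Int.natCast_nonneg a) hrs'.le) (sub_nonneg.2 hx')
        nlinarith
      · rw [if_neg hsr]
        have : 0 ≤ (x : ℤ) * (((r : ℤ) + a) * a - 2 * r * a) := by
          have e : ((r : ℤ) + a) * a - 2 * r * a = a * (a - r) := by ring
          rw [e]; positivity
        linarith

lemma sum_fx_le {r s x : ℕ} : (fx r s x).sum ≤ x + s := by
  unfold fx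
  split_ifs <;> simp

lemma sum_D_le (r s : ℕ) (w : List ℕ) : (D r s w).sum ≤ w.length + 2 * s := by
  rw [← sum_cnt]
  rcases D_cases r s w with ⟨h, h2⟩ | ⟨n, h, h2⟩ | ⟨x, m, y, h, h2⟩
  · simp [h2]
  · rw [h, h2]; split_ifs <;> simp
  · rw [h, h2]
    have := @sum_fx_le r s x
    have := @sum_fx_le r s y
    simp; omega

lemma IsCInf.D {r s : ℕ} {w : List ℕ} (h : IsCInf r s w) : IsCInf r s (D r s w) :=
  fun k => h (k + 1)

lemma IsCInf.mem {r s : ℕ} {w : List ℕ} (h : IsCInf r s w) : ∀ a ∈ w, a = r ∨ a = s := h 0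

/-- Differentiation shortens words by the factor `2 * r * s / (r + s)`, up to a bounded error. -/
lemma length_D_le {r s : ℕ} (hr : 0 < r) (hrs : r < s)
    (h1 : (1 : ℝ) < 2 * r * s / (r + s)) {w : List ℕ} (h : IsCInf r s w) :
    ((D r s w).length : ℝ) ≤ w.length / (2 * r * s / (r + s)) + 3 * s := by
  have hd := defect_ge hrs h.D.mem h.D.D.mem
  have hs := sum_D_le r s w
  unfold defect at hd
  generalize (D r s w).sum = S at hd hs
  have hd' : -((r : ℝ) * s * (s - r)) ≤
      ((r : ℝ) + s) * S - 2 * r * s * (D r s w).length := by exact_mod_cast hd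
  have hs' : (S : ℝ) ≤ w.length + 2 * s := by exact_mod_cast hs
  have hr0 : (0 : ℝ) < r := by exact_mod_cast hr
  have hs0 : (0 : ℝ) < s := by exact_mod_cast hr.trans hrs
  have hp : (r : ℝ) + s < 2 * r * s := by
    rwa [lt_div_iff₀ (by positivity), one_mul] at h1
  have e : (w.length : ℝ) / (2 * r * s / (r + s)) + 3 * s =
      (((r : ℝ) + s) * w.length + 3 * s * (2 * r * s)) / (2 * r * s) := by
    field_simp
  rw [e, le_div_iff₀ (by positivity)]
  nlinarith [mul_le_mul_of_nonneg_left hs' (by positivity : (0 : ℝ) ≤ r + s),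
    mul_le_mul_of_nonneg_left hp.le hs0.le, mul_pos hr0 hs0,
    mul_pos (mul_pos hr0 hr0) hs0, mul_pos (mul_pos hr0 hs0) hs0]

/-! ### Fibres of the derivative -/

lemma le_of_fx_eq_nil {r s x : ℕ} (h : fx r s x = []) : x ≤ r := by
  unfold fx at h
  split_ifs at h
  assumption

lemma length_le_of_D_eq_nil {r s : ℕ} (hrs : r < s) {w : List ℕ} (h : D r s w = []) :
    w.length ≤ 2 * s := by
  rw [← sum_cnt]
  rcases D_cases r s w with ⟨h1, h2⟩ | ⟨n, h1, h2⟩ | ⟨x, m, y, h1, h2⟩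
  · simp [h1]
  · rw [h1]
    rw [h] at h2
    split_ifs at h2
    simp; omega
  · rw [h] at h2
    have h3 := h2.symm
    simp only [List.append_eq_nil_iff] at h3
    have := le_of_fx_eq_nil h3.1.1
    have := le_of_fx_eq_nil h3.2
    rw [h1, h3.1.2]
    simp; omega

/-- Length of the first run (`0` for the empty word). -/
def firstRun (w : List ℕ) : ℕ := (cnt w).headD 0

/-- Length of the last run (`0` for the empty word). -/
def lastRun (w : List ℕ) : ℕ := (cnt w).getLastD 0

lemma lastRun_of {w m : List ℕ} {x y : ℕ} (h : cnt w = x :: (m ++ [y])) : lastRun w = y := by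
  rw [lastRun, h, ← List.cons_append, List.getLastD_concat]

lemma lastRun_of_single {w : List ℕ} {x : ℕ} (h : cnt w = [x]) : lastRun w = x := by
  simp [lastRun, h]

/-- A word with nonempty derivative is recovered from its derivative, its first letter and the
lengths of its first and last runs. -/
lemma eq_of_D_eq {r s : ℕ} (hrs : r < s) {a : ℕ} {w w' : List ℕ} (hw : IsCInf r s w)
    (hw' : IsCInf r s w') (ha : w.head? = some a) (ha' : w'.head? = some a)
    (hne : D r s w ≠ []) (hD : D r s w = D r s w') (hf : firstRun w = firstRun w')
    (hl : lastRun w = lastRun w') : w = w' := by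
  suffices hc : cnt w = cnt w' by
    cases w with
    | nil => simp at ha
    | cons b l =>
      cases w' with
      | nil => simp at ha'
      | cons b' l' =>
        simp only [List.head?_cons, Option.some.injEq] at ha ha'
        subst ha; subst ha'
        rw [← expand_cnt hw.mem, ← expand_cnt hw'.mem, hc]
  -- a one-run word has derivative of length at most one, whereas in a word with several runs the
  -- first and the last one, if of length at least `s`, contribute one letter each
  have key : ∀ n x y : ℕ, ∀ m : List ℕ, (if n < s then ([] : List ℕ) else [n]) ≠ [] →
      (if n < s then ([] : List ℕ) else [n]) = fx r s x ++ m ++ fx r s y →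
      n = x → n = y → False := by
    intro n x y m h1 h2 h3 h4
    subst h3; subst h4
    by_cases h5 : n < s
    · simp [h5] at h1
    · have h6 := congrArg List.length h2
      have h7 : ¬ n ≤ r := by omega
      by_cases h8 : n ≤ s <;> simp [h5, fx, h7, h8] at h6
  rcases D_cases r s w with ⟨h1, h2⟩ | ⟨n, h1, h2⟩ | ⟨x, m, y, h1, h2⟩ <;>
  rcases D_cases r s w' with ⟨h1', h2'⟩ | ⟨n', h1', h2'⟩ | ⟨x', m', y', h1', h2'⟩
  · exact absurd h2 hne
  · exact absurd h2 hne
  · exact absurd h2 hne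
  · exact absurd (hD.trans h2') hne
  · simp only [firstRun, h1, h1', List.headD_cons] at hf
    rw [h1, h1', hf]
  · exfalso
    simp only [firstRun, h1, h1', List.headD_cons] at hf
    rw [lastRun_of_single h1, lastRun_of h1'] at hl
    exact key n x' y' m' (h2 ▸ hne) (by rw [← h2, hD, h2']) hf hl
  · exact absurd (hD.trans h2') hne
  · exfalso
    simp only [firstRun, h1, h1', List.headD_cons] at hf
    rw [lastRun_of h1, lastRun_of_single h1'] at hl
    exact key n' x y m (by rw [← h2', ← hD]; exact hne) (by rw [← h2', ← hD, h2]) hf.symm hl.symm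
  · simp only [firstRun, h1, h1', List.headD_cons] at hf
    rw [lastRun_of h1, lastRun_of h1'] at hl
    subst hf; subst hl
    rw [h2, h2'] at hD
    have hm : m = m' := by simpa using hD
    rw [h1, h1', hm]

lemma firstRun_bounds {r s : ℕ} (hrs : r < s) {w : List ℕ} (hw : IsCInf r s w)
    (hne : D r s w ≠ []) :
    1 ≤ firstRun w ∧ firstRun w ≤ s ∧ 1 ≤ lastRun w ∧ lastRun w ≤ s := by
  have hp := cnt_pos w
  have hD := hw.D.mem
  rcases D_cases r s w with ⟨h1, h2⟩ | ⟨n, h1, h2⟩ | ⟨x, m, y, h1, h2⟩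
  · exact absurd h2 hne
  · rw [h1] at hp
    rw [h2] at hne hD
    split_ifs at hne hD with h3
    · exact absurd rfl hne
    · have := hp n (by simp)
      have := hD n (by simp)
      simp only [firstRun, lastRun, h1]
      simp
      omega
  · rw [h1] at hp
    rw [h2] at hD
    have hx : x ≤ s := le_of_fx hrs (fun b hb => hD b (by simp [hb]))
    have hy : y ≤ s := le_of_fx hrs (fun b hb => hD b (by simp [hb]))
    have := hp x (by simp)
    have := hp y (by simp)
    simp only [lastRun_of h1, firstRun, h1, List.headD_cons]
    omega

/-- A first run longer than `r` is extended to length `s`, so a derivative starting with `r` forces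
a short first run. -/
lemma firstRun_le {r s : ℕ} (hrs : r < s) {w : List ℕ}
    (hd : (D r s w).head? = some r) : firstRun w ≤ r := by
  rcases D_cases r s w with ⟨h1, h2⟩ | ⟨n, h1, h2⟩ | ⟨x, m, y, h1, h2⟩
  · simp [h2] at hd
  · rw [h2] at hd
    split_ifs at hd
    · simp at hd
    · simp at hd; omega
  · simp only [firstRun, h1, List.headD_cons]
    by_contra hx
    rw [h2] at hd
    by_cases h3 : x ≤ s
    · simp [fx, hx, h3] at hd; omega
    · simp [fx, hx, h3] at hd; omega

/-! ### Counting -/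

/-- The C∞-words of length at most `x` whose first letter is `a`. -/
def startSet (r s a : ℕ) (x : ℝ) : Set (List ℕ) :=
  {w | (w.length : ℝ) ≤ x ∧ IsCInf r s w ∧ w.head? = some a}

lemma finite_words (r s n : ℕ) :
    {w : List ℕ | w.length ≤ n ∧ ∀ a ∈ w, a = r ∨ a = s}.Finite := by
  have h : {w : List ℕ | w.length ≤ n ∧ ∀ a ∈ w, a = r ∨ a = s} ⊆
      ⋃ k ∈ Finset.range (n + 1), (allWords r s k : Set (List ℕ)) := by
    rintro w ⟨hw, hl⟩
    have hmem : w ∈ allWords r s w.length := by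
      clear hw
      induction w with
      | nil => simp [allWords]
      | cons a l ih =>
        have := ih (fun b hb => hl b (List.mem_cons_of_mem _ hb))
        rcases hl a (by simp) with rfl | rfl <;> simp [allWords, this]
    simp only [Set.mem_iUnion, Finset.mem_range, Finset.mem_coe]
    exact ⟨w.length, by omega, hmem⟩
  exact (Set.Finite.biUnion (Finset.finite_toSet _) (fun k _ => Finset.finite_toSet _)).subset h

lemma finite_startSet (r s a : ℕ) (x : ℝ) : (startSet r s a x).Finite :=
  (finite_words r s ⌊x⌋₊).subset fun _ hw => ⟨Nat.le_floor hw.1, hw.2.1.mem⟩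

/-- Number of words over `{r, s}` of length at most `2 * s`; it bounds the number of C∞-words with
empty derivative. -/
noncomputable def shortCount (r s : ℕ) : ℕ :=
  {w : List ℕ | w.length ≤ 2 * s ∧ ∀ a ∈ w, a = r ∨ a = s}.ncard

/-- Words with a given first letter and a given nonempty derivative `v` number at most `r * s` if `v` starts
with `r`, and at most `s ^ 2` if `v` starts with `s`. -/
lemma card_startSet_le {r s : ℕ} (hr : 0 < r) (hrs : r < s)
    (h1 : (1 : ℝ) < 2 * r * s / (r + s)) (a : ℕ) (x : ℝ) :
    (startSet r s a x).ncard ≤ shortCount r s +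
      (r * s * (startSet r s r (x / (2 * r * s / (r + s)) + 3 * s)).ncard +
        s * s * (startSet r s s (x / (2 * r * s / (r + s)) + 3 * s)).ncard) := by
  set z := x / (2 * r * s / (r + s)) + 3 * s with hz
  set A := {w ∈ startSet r s a x | D r s w = []} with hA
  set B := {w ∈ startSet r s a x | D r s w ≠ []} with hB
  have hAB : startSet r s a x = A ∪ B := by
    ext w
    simp only [hA, hB, Set.mem_union, Set.mem_sep_iff]
    tauto
  have hcA : A.ncard ≤ shortCount r s :=
    Set.ncard_le_ncard (fun w hw => ⟨length_le_of_D_eq_nil hrs hw.2, hw.1.2.1.mem⟩)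
      (finite_words r s (2 * s))
  let P : ℕ → ℕ → Set (ℕ × ℕ × List ℕ) := fun b k =>
    (Set.Icc 1 k) ×ˢ ((Set.Icc 1 s) ×ˢ (startSet r s b z))
  have hPfin : ∀ b k, (P b k).Finite := fun b k =>
    (Set.finite_Icc 1 k).prod ((Set.finite_Icc 1 s).prod (finite_startSet r s b z))
  have hPcard : ∀ b k, (P b k).ncard = k * (s * (startSet r s b z).ncard) := by
    intro b k
    have hI : ∀ j : ℕ, (Set.Icc 1 j).ncard = j := by
      intro j
      rw [← Finset.coe_Icc, Set.ncard_coe_finset]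
      simp
    simp only [P, Set.ncard_prod, hI]
  have hcB : B.ncard ≤ (P r r ∪ P s s).ncard := by
    refine Set.ncard_le_ncard_of_injOn (fun w => (firstRun w, lastRun w, D r s w)) ?_ ?_
      ((hPfin r r).union (hPfin s s))
    · rintro w ⟨⟨hwx, hw, hwa⟩, hne⟩
      have hb := firstRun_bounds hrs hw hne
      have hlen : ((D r s w).length : ℝ) ≤ z := by
        refine (length_D_le hr hrs h1 hw).trans ?_
        rw [hz]
        gcongr
      obtain ⟨c, hc⟩ : ∃ c, (D r s w).head? = some c := by
        cases hv : D r s w with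
        | nil => exact absurd hv hne
        | cons c l => exact ⟨c, rfl⟩
      rcases hw.D.mem c (List.mem_of_mem_head? hc) with rfl | rfl
      · exact Or.inl ⟨⟨hb.1, firstRun_le hrs hc⟩, ⟨hb.2.2.1, hb.2.2.2⟩, hlen, hw.D, hc⟩
      · exact Or.inr ⟨⟨hb.1, hb.2.1⟩, ⟨hb.2.2.1, hb.2.2.2⟩, hlen, hw.D, hc⟩
    · rintro w ⟨⟨-, hw, hwa⟩, hne⟩ w' ⟨⟨-, hw', hwa'⟩, -⟩ he
      simp only [Prod.mk.injEq] at he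
      exact eq_of_D_eq hrs hw hw' hwa hwa' hne he.2.2 he.1 he.2.1
  have h2 := Set.ncard_union_le (P r r) (P s s)
  rw [hPcard, hPcard] at h2
  have h3 := Set.ncard_union_le A B
  rw [← hAB] at h3
  calc _ ≤ _ := h3
    _ ≤ _ := add_le_add hcA (hcB.trans h2)
    _ = _ := by ring

/-- The shift `3 * s * ρ / (ρ - 1)` is the fixed point of `x ↦ x / ρ + 3 * s`, so that the bound
`ρ ^ (k + 1) + shift` on lengths passes to `ρ ^ k + shift` for the derivatives. -/
lemma card_startSet_pow {r s : ℕ} (hr : 0 < r) (hrs : r < s)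
    (h1 : (1 : ℝ) < 2 * r * s / (r + s)) :
    ∃ K : ℝ, ∀ k : ℕ, ∀ a, a = r ∨ a = s →
      ((startSet r s a ((2 * r * s / (r + s) : ℝ) ^ k +
        3 * s * (2 * r * s / (r + s)) / (2 * r * s / (r + s) - 1))).ncard : ℝ) ≤
          K * ((r : ℝ) * s + s ^ 2) ^ k := by
  have hrec := card_startSet_le hr hrs h1
  set ρ : ℝ := 2 * r * s / (r + s) with hρ
  set X : ℝ := 3 * s * ρ / (ρ - 1) with hX
  set c : ℝ := (shortCount r s : ℝ) with hc
  have hc0 : 0 ≤ c := Nat.cast_nonneg _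
  have hρ1 : 0 < ρ - 1 := by linarith
  have hρ0 : 0 < ρ := by linarith
  have hr1 : (1 : ℝ) ≤ r := by exact_mod_cast hr
  have hs2 : (2 : ℝ) ≤ s := by
    have : 2 ≤ s := by omega
    exact_mod_cast this
  have hβ : (2 : ℝ) ≤ r * s + s ^ 2 := by nlinarith
  have hfix : ∀ k : ℕ, (ρ ^ (k + 1) + X) / ρ + 3 * s = ρ ^ k + X := by
    intro k
    rw [hX]
    field_simp
    ring
  let K : ℝ := (startSet r s r (1 + X)).ncard + (startSet r s s (1 + X)).ncard + c
  have main : ∀ k : ℕ, ∀ a, a = r ∨ a = s →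
      ((startSet r s a (ρ ^ k + X)).ncard : ℝ) + c ≤ K * ((r : ℝ) * s + s ^ 2) ^ k := by
    intro k
    induction k with
    | zero =>
      intro a ha
      simp only [pow_zero, mul_one, K]
      rcases ha with rfl | rfl
      · linarith [Nat.cast_nonneg (α := ℝ) (startSet a s s (1 + X)).ncard]
      · linarith [Nat.cast_nonneg (α := ℝ) (startSet r a r (1 + X)).ncard]
    | succ k ih =>
      intro a _
      have h := hrec a (ρ ^ (k + 1) + X)
      rw [hfix] at h
      have h' : ((startSet r s a (ρ ^ (k + 1) + X)).ncard : ℝ) ≤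
          c + (r * s * (startSet r s r (ρ ^ k + X)).ncard +
            s * s * (startSet r s s (ρ ^ k + X)).ncard) := by
        rw [hc]; exact_mod_cast h
      have hir := mul_le_mul_of_nonneg_left (ih r (Or.inl rfl))
        (by positivity : (0 : ℝ) ≤ (r : ℝ) * s)
      have his := mul_le_mul_of_nonneg_left (ih s (Or.inr rfl))
        (by positivity : (0 : ℝ) ≤ (s : ℝ) * s)
      have hcβ := mul_le_mul_of_nonneg_right hβ hc0
      rw [pow_succ ((r : ℝ) * s + s ^ 2)]
      linarith
  exact ⟨K, fun k a ha => by linarith [main k a ha]⟩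

/-! ### The bound -/

/-- Upper bound on the complexity of C∞-words over {r,s}. -/
theorem complexity_upper_bound (r s : ℕ) (hr : 0 < r) (hrs : r < s)
    (h1 : (1 : ℝ) < 2 * r * s / (r + s)) :
    ∃ N : ℕ, ∀ n : ℕ, N ≤ n →
      (({w : List ℕ | w.length = n ∧ IsCInf r s w}.ncard : ℝ)) ≤
        (n : ℝ) ^ (Real.log (2 * (s : ℝ) ^ 2) / Real.log (2 * r * s / (r + s))) := by
  have hr0 : (0 : ℝ) < r := by exact_mod_cast hr
  have hrs0 : (r : ℝ) < s := by exact_mod_cast hrs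
  obtain ⟨K, hK⟩ := card_startSet_pow hr hrs h1
  set ρ : ℝ := 2 * r * s / (r + s) with hρ
  set β : ℝ := r * s + s ^ 2 with hβ
  have hs1 : (1 : ℝ) < s := by
    have : 1 < s := by omega
    exact_mod_cast this
  have hβ1 : 1 < β := by nlinarith [mul_pos hr0 (by linarith : (0 : ℝ) < s)]
  have hβ0 : 0 < β := by linarith
  have hβs : β < 2 * (s : ℝ) ^ 2 := by nlinarith
  have hlρ : 0 < Real.log ρ := Real.log_pos h1
  have hlβ : 0 < Real.log β := Real.log_pos hβ1
  have hα : Real.log β / Real.log ρ < Real.log (2 * (s : ℝ) ^ 2) / Real.log ρ :=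
    div_lt_div_of_pos_right (Real.log_lt_log hβ0 hβs) hlρ
  set α' := Real.log β / Real.log ρ with hα'
  set α := Real.log (2 * (s : ℝ) ^ 2) / Real.log ρ with hαd
  -- the gap between the two exponents absorbs every multiplicative constant
  have hev : ∀ᶠ n : ℕ in Filter.atTop, 2 * K * β ≤ (n : ℝ) ^ (α - α') :=
    ((tendsto_rpow_atTop (sub_pos.2 hα)).comp tendsto_natCast_atTop_atTop).eventually_ge_atTop _
  obtain ⟨N, hN⟩ := Filter.eventually_atTop.1 hev
  refine ⟨max N 1, fun n hn => ?_⟩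
  have hn1 : 1 ≤ n := le_trans (le_max_right _ _) hn
  have hnR : (1 : ℝ) ≤ n := by exact_mod_cast hn1
  have hn0 : (0 : ℝ) < n := by linarith
  have hNn := hN n (le_trans (le_max_left _ _) hn)
  set k := ⌈Real.log n / Real.log ρ⌉₊ with hk
  have hlog : 0 ≤ Real.log n / Real.log ρ := div_nonneg (Real.log_nonneg hnR) hlρ.le
  have hnk : (n : ℝ) ≤ ρ ^ k := by
    rw [← Real.log_le_log_iff hn0 (by positivity), Real.log_pow]
    exact (div_le_iff₀ hlρ).1 (Nat.le_ceil _)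
  have hβk : β ^ k ≤ β * (n : ℝ) ^ α' := by
    rw [← Real.log_le_log_iff (by positivity) (by positivity), Real.log_pow,
      Real.log_mul hβ0.ne' (by positivity), Real.log_rpow hn0]
    have h2 : (k : ℝ) ≤ Real.log n / Real.log ρ + 1 := (Nat.ceil_lt_add_one hlog).le
    calc (k : ℝ) * Real.log β ≤ (Real.log n / Real.log ρ + 1) * Real.log β := by gcongr
      _ = Real.log β + α' * Real.log n := by rw [hα']; ring
  have hX : 0 ≤ (3 * s : ℝ) * ρ / (ρ - 1) := by
    have : 0 < ρ - 1 := by linarith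
    positivity
  have hsub : {w : List ℕ | w.length = n ∧ IsCInf r s w} ⊆
      startSet r s r (ρ ^ k + 3 * s * ρ / (ρ - 1)) ∪
        startSet r s s (ρ ^ k + 3 * s * ρ / (ρ - 1)) := by
    rintro w ⟨hw, hc⟩
    cases w with
    | nil => simp at hw; omega
    | cons a l =>
      have hlen : (((a :: l).length : ℕ) : ℝ) ≤ ρ ^ k + 3 * s * ρ / (ρ - 1) := by
        rw [hw]; linarith
      rcases hc 0 a (by simp) with rfl | rfl
      · exact Or.inl ⟨hlen, hc, rfl⟩
      · exact Or.inr ⟨hlen, hc, rfl⟩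
  have hcard := (Set.ncard_le_ncard hsub
    ((finite_startSet _ _ _ _).union (finite_startSet _ _ _ _))).trans (Set.ncard_union_le _ _)
  have hcard' : (({w : List ℕ | w.length = n ∧ IsCInf r s w}.ncard : ℝ)) ≤
      (startSet r s r (ρ ^ k + 3 * s * ρ / (ρ - 1))).ncard +
        (startSet r s s (ρ ^ k + 3 * s * ρ / (ρ - 1))).ncard := by exact_mod_cast hcard
  have hKr := hK k r (Or.inl rfl)
  have hKs := hK k s (Or.inr rfl)
  have hK0 : 0 ≤ K := by
    have h0 := hK 0 r (Or.inl rfl)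
    rw [pow_zero β, mul_one] at h0
    exact (Nat.cast_nonneg _).trans h0
  calc (({w : List ℕ | w.length = n ∧ IsCInf r s w}.ncard : ℝ)) ≤ 2 * K * β ^ k := by linarith
    _ ≤ 2 * K * (β * (n : ℝ) ^ α') := by gcongr
    _ = 2 * K * β * (n : ℝ) ^ α' := by ring
    _ ≤ (n : ℝ) ^ (α - α') * (n : ℝ) ^ α' := by gcongr
    _ = (n : ℝ) ^ α := by rw [← Real.rpow_add hn0]; congr 1; ring

end Kola
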